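/- Two AMP chain graphs G and H over the same finite vertex set V are Markov equivalent if and only if they represent the same separations, i.e. the set of probability distributions on ℝ^V satisfying the global Markov property with respect to G equals the set satisfying it with respect to H if and only if, for all pairwise disjoint X, Y, Z ⊆ V, X ⊥_G Y | Z holds exactly when X ⊥_H Y | Z holds. -/

import Mathlib

open Matrix MeasureTheory ProbabilityTheory

attribute [local instance] Classical.propDecidable

noncomputable section

variable {V : Type*}

/-- The submatrix of `S` with rows indexed by `X` and columns indexed by `Y`. -/
def msub (S : Matrix V V ℝ) (X Y : Finset V) : Matrix X Y ℝ :=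
  Matrix.of fun i j => S i.1 j.1

/-- Conditional independence `X ⊥ Y | Z` for a centered Gaussian distribution with
positive definite covariance matrix `S`:  `Σ_{X,Y} − Σ_{X,Z} (Σ_{Z,Z})⁻¹ Σ_{Z,Y} = 0`. -/
def gaussCI [Fintype V] [DecidableEq V] (S : Matrix V V ℝ) (X Y Z : Finset V) : Prop :=
  msub S X Y - msub S X Z * (msub S Z Z)⁻¹ * msub S Z Y = 0

/-- Pairwise disjointness of three sets. -/
def PDisj (X Y Z : Finset V) : Prop :=
  Disjoint X Y ∧ Disjoint X Z ∧ Disjoint Y Z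

/-- Pairwise disjointness of four sets. -/
def PDisj4 (X Y W Z : Finset V) : Prop :=
  Disjoint X Y ∧ Disjoint X W ∧ Disjoint X Z ∧ Disjoint Y W ∧ Disjoint Y Z ∧ Disjoint W Z

/-- A graph with three kinds of edges: undirected (`undir`), solid directed (`solid`,
written `A → B`) and dashed directed (`dashed`, written `A ⇢ B`).  No axioms are imposed. -/
structure PreGraph (V : Type*) where
  undir : V → V → Prop
  solid : V → V → Prop
  dashed : V → V → Prop

namespace PreGraph

variable (G : PreGraph V)

/-- There is an undirected edge between `a` and `b`. -/
def und (a b : V) : Prop := G.undir a b ∨ G.undir b a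

/-- `a` and `b` are adjacent. -/
def adj (a b : V) : Prop :=
  G.und a b ∨ G.solid a b ∨ G.solid b a ∨ G.dashed a b ∨ G.dashed b a

/-- The edge between `a` and `b` is undirected or directed (solid or dashed) from `a` to `b`. -/
def fwd (a b : V) : Prop := G.und a b ∨ G.solid a b ∨ G.dashed a b

/-- A route in `G`: a sequence of nodes `nodes 0, nodes 1, …, nodes len` such that
consecutive nodes are adjacent. -/
structure Route (G : PreGraph V) where
  len : ℕ
  nodes : ℕ → V
  adj_step : ∀ i < len, G.adj (nodes i) (nodes (i + 1))

/-- `c` is a collider node between `a` and `b`:  `a ⇢ c ⇠ b`, `a ⇢ c − b` (in either of the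
two traversal directions) or `a ⇢ c ← b` (in either of the two traversal directions). -/
def colliderTriple (a c b : V) : Prop :=
  (G.dashed a c ∧ G.dashed b c) ∨
  (G.dashed a c ∧ G.und c b) ∨ (G.und a c ∧ G.dashed b c) ∨
  (G.dashed a c ∧ G.solid b c) ∨ (G.solid a c ∧ G.dashed b c)

variable {G} in
/-- The node at position `k` of the route `ρ` is a collider node of `ρ`. -/
def Route.colliderNodeAt (ρ : G.Route) (k : ℕ) : Prop :=
  1 ≤ k ∧ k < ρ.len ∧ G.colliderTriple (ρ.nodes (k - 1)) (ρ.nodes k) (ρ.nodes (k + 1))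

variable {G} in
/-- The positions `p, …, q` of `ρ` form a collider section of `ρ`, i.e. a maximal undirected
subroute `C1 − ⋯ − Cn` of `ρ` such that `A → C1 − ⋯ − Cn ← B` is a subroute of `ρ`. -/
def Route.colliderSectionOcc (ρ : G.Route) (p q : ℕ) : Prop :=
  1 ≤ p ∧ p ≤ q ∧ q + 1 ≤ ρ.len ∧
  (∀ m, p ≤ m → m < q → G.und (ρ.nodes m) (ρ.nodes (m + 1))) ∧
  G.solid (ρ.nodes (p - 1)) (ρ.nodes p) ∧ G.solid (ρ.nodes (q + 1)) (ρ.nodes q)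

variable {G} in
/-- The node at position `k` of `ρ` lies in a collider section of `ρ`. -/
def Route.inColliderSectionAt (ρ : G.Route) (k : ℕ) : Prop :=
  ∃ p q, ρ.colliderSectionOcc p q ∧ p ≤ k ∧ k ≤ q

variable {G} in
/-- The route `ρ` is `Z`-open: (i) all collider nodes are in `Z`, (ii) every collider
section contains some node of `Z`, and (iii) every node which is neither a collider node
nor inside a collider section is outside `Z`. -/
def Route.IsZOpen (ρ : G.Route) (Z : Finset V) : Prop :=
  (∀ k, ρ.colliderNodeAt k → ρ.nodes k ∈ Z) ∧
  (∀ p q, ρ.colliderSectionOcc p q → ∃ m, p ≤ m ∧ m ≤ q ∧ ρ.nodes m ∈ Z) ∧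
  (∀ k ≤ ρ.len, ¬ ρ.colliderNodeAt k → ¬ ρ.inColliderSectionAt k → ρ.nodes k ∉ Z)

variable {G} in
/-- A pure collider route (with at least one edge): every intermediate node is a collider
node or lies in a collider section of the route. -/
def Route.IsPureCollider (ρ : G.Route) : Prop :=
  1 ≤ ρ.len ∧ ∀ k, 0 < k → k < ρ.len → ρ.colliderNodeAt k ∨ ρ.inColliderSectionAt k

/-- Separation `X ⊥_G Y | Z`: there is no `Z`-open route in `G` between a node of `X` and a
node of `Y`. -/
def Sep (X Y Z : Finset V) : Prop :=
  ¬ ∃ ρ : G.Route,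
      ((ρ.nodes 0 ∈ X ∧ ρ.nodes ρ.len ∈ Y) ∨ (ρ.nodes 0 ∈ Y ∧ ρ.nodes ρ.len ∈ X)) ∧
      ρ.IsZOpen Z

section Finite

variable [Fintype V] [DecidableEq V]

/-- The fathers of `X`: nodes `b` with `b → a` in `G` for some `a ∈ X`. -/
def fa (X : Finset V) : Finset V := Finset.univ.filter fun b => ∃ a ∈ X, G.solid b a

/-- The mothers of `X`: nodes `b` with `b ⇢ a` in `G` for some `a ∈ X`. -/
def mo (X : Finset V) : Finset V := Finset.univ.filter fun b => ∃ a ∈ X, G.dashed b a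

/-- The parents of `X`. -/
def pa (X : Finset V) : Finset V := G.fa X ∪ G.mo X

/-- The neighbors of `X`: nodes `b` with `b − a` in `G` for some `a ∈ X`. -/
def nb (X : Finset V) : Finset V := Finset.univ.filter fun b => ∃ a ∈ X, G.und b a

/-- There is a descending route from `a` to `b`: all edges undirected or directed in the
direction of travel, containing at least one directed edge. -/
def descends (a b : V) : Prop :=
  ∃ (n : ℕ) (f : ℕ → V), f 0 = a ∧ f n = b ∧ (∀ i < n, G.fwd (f i) (f (i + 1))) ∧
    ∃ i < n, G.solid (f i) (f (i + 1)) ∨ G.dashed (f i) (f (i + 1))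

/-- The non-descendants of `X`. -/
def nd (X : Finset V) : Finset V := Finset.univ.filter fun b => ¬ ∃ a ∈ X, G.descends a b

/-- Connectivity by undirected routes. -/
def uconn : V → V → Prop := Relation.ReflTransGen G.und

/-- The chain component containing `i`. -/
def cc (i : V) : Finset V := Finset.univ.filter fun j => G.uconn i j

/-- The set of chain components of `G`. -/
def ccs : Finset (Finset V) := Finset.univ.image G.cc

/-- The nodes incident to some edge of `G`. -/
def verts : Finset V := Finset.univ.filter fun a => ∃ b, G.adj a b

/-- `π` is a topological ordering of the chain components: it is constant on components and
increases along directed edges. -/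
def IsTopoOrder (π : V → ℕ) : Prop :=
  (∀ a b, G.uconn a b → π a = π b) ∧ ∀ a b, G.solid a b ∨ G.dashed a b → π a < π b

/-- Equation 1: for every topological ordering of the chain components, each component `K`
is independent of the preceding components minus `Pa(K)` given `Pa(K)`. -/
def eq1 (S : Matrix V V ℝ) : Prop :=
  ∀ π : V → ℕ, G.IsTopoOrder π → ∀ i : V,
    gaussCI S (G.cc i) ((Finset.univ.filter fun b => π b < π i) \ G.pa (G.cc i))
      (G.pa (G.cc i))

/-- The regression coefficients `β_K = Σ_{K,Pa(K)} (Σ_{Pa(K),Pa(K)})⁻¹`. -/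
def beta (S : Matrix V V ℝ) (K : Finset V) : Matrix K (G.pa K) ℝ :=
  msub S K (G.pa K) * (msub S (G.pa K) (G.pa K))⁻¹

/-- The conditional covariance matrix `Λ_K`. -/
def lam (S : Matrix V V ℝ) (K : Finset V) : Matrix K K ℝ :=
  msub S K K - msub S K (G.pa K) * (msub S (G.pa K) (G.pa K))⁻¹ * msub S (G.pa K) K

/-- The precision matrix `Ω = (Σ_{K ∪ Pa(K), K ∪ Pa(K)})⁻¹`. -/
def om (S : Matrix V V ℝ) (K : Finset V) : Matrix ↥(K ∪ G.pa K) ↥(K ∪ G.pa K) ℝ :=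
  (msub S (K ∪ G.pa K) (K ∪ G.pa K))⁻¹

/-- Equation 6: `(β_K)_{i,j} = 0` for all `i ∈ K` and `j ∈ Mo(K) ∖ Mo(i)`. -/
def eq6 (S : Matrix V V ℝ) : Prop :=
  ∀ K ∈ G.ccs, ∀ i (hi : i ∈ K), ∀ j (hj : j ∈ G.pa K),
    j ∈ G.mo K → j ∉ G.mo {i} → G.beta S K ⟨i, hi⟩ ⟨j, hj⟩ = 0

/-- Equation 7: `Ω_{i,j} = 0` for all `i ∈ K` and `j ∈ Fa(K) ∖ Fa(i)`. -/
def eq7 (S : Matrix V V ℝ) : Prop :=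
  ∀ K ∈ G.ccs, ∀ i (hi : i ∈ K), ∀ j (hj : j ∈ G.pa K),
    j ∈ G.fa K → j ∉ G.fa {i} →
    G.om S K ⟨i, Finset.mem_union_left _ hi⟩ ⟨j, Finset.mem_union_right _ hj⟩ = 0

/-- Equation 8: `(Λ_K⁻¹)_{i,j} = 0` for all `i ∈ K` and `j ∈ K ∖ ({i} ∪ Ne(i))`. -/
def eq8 (S : Matrix V V ℝ) : Prop :=
  ∀ K ∈ G.ccs, ∀ i (hi : i ∈ K), ∀ j (hj : j ∈ K),
    j ≠ i → j ∉ G.nb {i} → (G.lam S K)⁻¹ ⟨i, hi⟩ ⟨j, hj⟩ = 0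

/-- `p` satisfies Equation 1 and the zero restrictions of Equations 6–8 w.r.t. `G`. -/
def eqs (S : Matrix V V ℝ) : Prop := G.eq1 S ∧ G.eq6 S ∧ G.eq7 S ∧ G.eq8 S

/-- The global Markov property with respect to `G`, for an abstract ternary
(conditional-independence) relation `I`. -/
def globalMP (I : Finset V → Finset V → Finset V → Prop) : Prop :=
  ∀ X Y Z : Finset V, PDisj X Y Z → G.Sep X Y Z → I X Y Z

/-- The block-recursive Markov property (B1)–(B3) with respect to `G`. -/
def blockRecMP (I : Finset V → Finset V → Finset V → Prop) : Prop :=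
  ∀ K ∈ G.ccs, ∀ i ∈ K,
    I {i} (((G.nd K \ K) \ G.fa K) \ G.mo {i}) (G.fa K ∪ G.mo {i}) ∧
    I {i} (((G.nd K \ K) \ G.fa {i}) \ G.mo K) ((K \ {i}) ∪ G.fa {i} ∪ G.mo K) ∧
    ∀ j ∈ K, j ≠ i → j ∉ G.nb {i} → I {i} {j} ((K \ {i, j}) ∪ G.pa K)

/-- The pairwise Markov property (P1)–(P2) with respect to `G`. -/
def pairwiseMP (I : Finset V → Finset V → Finset V → Prop) : Prop :=
  ∀ i j : V, i ≠ j → ¬ G.adj i j → ∀ K ∈ G.ccs, i ∈ K →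
    (j ∈ ((G.nd {i} \ K) \ G.fa K) \ G.mo {i} → I {i} {j} ((G.nd {i} \ K) \ {j})) ∧
    (j ∈ ((G.nd {i} \ {i}) \ G.fa {i}) \ G.mo K → I {i} {j} (G.nd {i} \ {i, j}))

/-- The local Markov property (L1)–(L2) with respect to `G`. -/
def localMP (I : Finset V → Finset V → Finset V → Prop) : Prop :=
  ∀ K ∈ G.ccs, ∀ i ∈ K,
    I {i} (((G.nd {i} \ K) \ G.fa K) \ G.mo {i}) (G.fa K ∪ G.mo {i}) ∧
    I {i} ((((G.nd {i} \ {i}) \ G.pa {i}) \ G.nb {i}) \ G.mo (G.nb {i}))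
      (G.pa {i} ∪ G.nb {i} ∪ G.mo (G.nb {i}))

/-- The subgraph `G^U`: it keeps the edge `A ⊸ B` (with its type and orientation) iff `G`
has a route `A ⊸ B ⊸ ⋯ ⊸ C` with `C ∈ U`, all edges undirected or directed in the
direction of travel, and no subroute `R ⇢ S − T`. -/
def goodFrom (U : Finset V) (a b : V) : Prop :=
  ∃ (f : ℕ → V) (n : ℕ), 1 ≤ n ∧ f 0 = a ∧ f 1 = b ∧ f n ∈ U ∧
    (∀ i < n, G.fwd (f i) (f (i + 1))) ∧
    ∀ i, i + 2 ≤ n → ¬ (G.dashed (f i) (f (i + 1)) ∧ G.und (f (i + 1)) (f (i + 2)))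

/-- The graph `G^U`. -/
def derived (U : Finset V) : PreGraph V where
  undir a b := G.undir a b ∧ G.goodFrom U a b
  solid a b := G.solid a b ∧ G.goodFrom U a b
  dashed a b := G.dashed a b ∧ G.goodFrom U a b

/-- The set `Y'` used in Lemmas 2 and 3:
`Y' = {B' ∈ V(G^{X∪Y∪Z}) ∖ (X ∪ Z) : X ⊥_{G^{X∪Y∪Z}} B' | Z}`. -/
def derivedYp (X Y Z : Finset V) : Finset V :=
  ((G.derived (X ∪ Y ∪ Z)).verts \ (X ∪ Z)).filter fun b =>
    (G.derived (X ∪ Y ∪ Z)).Sep X {b} Z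

/-- The set `X' = V(G^{X∪Y∪Z}) ∖ (Y' ∪ Z)` used in Lemmas 2 and 3. -/
def derivedXp (X Y Z : Finset V) : Finset V :=
  (G.derived (X ∪ Y ∪ Z)).verts \ (G.derivedYp X Y Z ∪ Z)

end Finite

end PreGraph

/-- A chain graph: at most one edge between any pair of distinct nodes (undirected, solid
directed, or dashed directed) and no semidirected cycles. -/
structure ChainGraph (V : Type*) extends PreGraph V where
  undir_symm : ∀ a b, toPreGraph.undir a b → toPreGraph.undir b a
  undir_irrefl : ∀ a, ¬ toPreGraph.undir a a
  solid_irrefl : ∀ a, ¬ toPreGraph.solid a a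
  dashed_irrefl : ∀ a, ¬ toPreGraph.dashed a a
  undir_not_solid : ∀ a b, toPreGraph.undir a b → ¬ toPreGraph.solid a b
  undir_not_dashed : ∀ a b, toPreGraph.undir a b → ¬ toPreGraph.dashed a b
  solid_not_solid : ∀ a b, toPreGraph.solid a b → ¬ toPreGraph.solid b a
  solid_not_dashed : ∀ a b, toPreGraph.solid a b → ¬ toPreGraph.dashed a b
  solid_not_dashed_rev : ∀ a b, toPreGraph.solid a b → ¬ toPreGraph.dashed b a
  dashed_not_dashed : ∀ a b, toPreGraph.dashed a b → ¬ toPreGraph.dashed b a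
  no_semidirected_cycle : ¬ ∃ (f : ℕ → V) (n : ℕ), 1 ≤ n ∧ f n = f 0 ∧
    (toPreGraph.solid (f 0) (f 1) ∨ toPreGraph.dashed (f 0) (f 1)) ∧
    ∀ i < n, toPreGraph.fwd (f i) (f (i + 1))

namespace ChainGraph

variable (G : ChainGraph V)

/-- An LWF chain graph: no dashed directed edges. -/
def IsLWF : Prop := ∀ a b, ¬ G.toPreGraph.dashed a b

/-- An AMP chain graph: no solid directed edges. -/
def IsAMP : Prop := ∀ a b, ¬ G.toPreGraph.solid a b

/-- A unified chain graph: `Fa(K) ∩ Mo(K) = ∅` for every chain component `K`. -/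
def IsUCG [Fintype V] [DecidableEq V] : Prop :=
  ∀ K ∈ G.toPreGraph.ccs, Disjoint (G.toPreGraph.fa K) (G.toPreGraph.mo K)

end ChainGraph


/-- The AMP chain graph obtained from `G` by deleting every solid directed edge. -/
def ChainGraph.dropSolid (G : ChainGraph V) : ChainGraph V where
  undir := G.toPreGraph.undir
  solid _ _ := False
  dashed := G.toPreGraph.dashed
  undir_symm := G.undir_symm
  undir_irrefl := G.undir_irrefl
  solid_irrefl _ h := h
  dashed_irrefl := G.dashed_irrefl
  undir_not_solid _ _ _ h := h
  undir_not_dashed := G.undir_not_dashed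
  solid_not_solid _ _ h := h.elim
  solid_not_dashed _ _ h := h.elim
  solid_not_dashed_rev _ _ h := h.elim
  dashed_not_dashed := G.dashed_not_dashed
  no_semidirected_cycle := fun ⟨f, n, hn, hcyc, hstart, hsteps⟩ =>
    G.no_semidirected_cycle ⟨f, n, hn, hcyc, Or.inr (hstart.resolve_left id),
      fun i hi => (hsteps i hi).imp id (Or.imp False.elim id)⟩

/-- The restriction of `ω : V → ℝ` to the coordinates in `S`. -/
def marg (S : Finset V) : (V → ℝ) → (S → ℝ) := fun ω s => ω s.1

lemma marg_measurable (S : Finset V) : Measurable (marg (V := V) S) :=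
  measurable_pi_lambda _ fun s => measurable_pi_apply s.1

/-- Conditional independence of the coordinate tuples indexed by `X` and `Y` given the
coordinate tuple indexed by `Z`, for a distribution `μ` on `ℝ^V`. -/
def mCI [Fintype V] (μ : Measure (V → ℝ)) [IsFiniteMeasure μ] (X Y Z : Finset V) : Prop :=
  CondIndepFun (MeasurableSpace.comap (marg Z) inferInstance) ((marg_measurable Z).comap_le)
    (marg X) (marg Y) μ

/-- A probability distribution `μ` on `ℝ^V` satisfies the global Markov property with
respect to `G`. -/
def measGlobalMarkov [Fintype V] [DecidableEq V] (G : PreGraph V) (μ : Measure (V → ℝ))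
    [IsFiniteMeasure μ] : Prop :=
  ∀ X Y Z : Finset V, PDisj X Y Z → G.Sep X Y Z → mCI μ X Y Z

/-- A graphoid over `V`: a ternary relation on pairwise disjoint subsets of `V` satisfying
symmetry, decomposition, weak union, contraction and intersection. -/
structure Graphoid (V : Type*) [DecidableEq V] where
  rel : Finset V → Finset V → Finset V → Prop
  symmetry : ∀ X Y Z : Finset V, PDisj X Y Z → rel X Y Z → rel Y X Z
  decomposition : ∀ X Y W Z : Finset V, PDisj4 X Y W Z → rel X (Y ∪ W) Z → rel X Y Z
  weakUnion : ∀ X Y W Z : Finset V, PDisj4 X Y W Z → rel X (Y ∪ W) Z → rel X Y (Z ∪ W)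
  contraction : ∀ X Y W Z : Finset V, PDisj4 X Y W Z →
    rel X Y (Z ∪ W) → rel X W Z → rel X (Y ∪ W) Z
  intersection : ∀ X Y W Z : Finset V, PDisj4 X Y W Z →
    rel X Y (Z ∪ W) → rel X W (Z ∪ Y) → rel X (Y ∪ W) Z

/-- The conditional variance `Σ_{a,a|B} = Σ_{a,a} − Σ_{a,B} (Σ_{B,B})⁻¹ Σ_{B,a}`. -/
def condVar [Fintype V] [DecidableEq V] (S : Matrix V V ℝ) (a : V) (B : Finset V) : ℝ :=
  S a a - ∑ b₁ : B, ∑ b₂ : B, S a b₁.1 * (msub S B B)⁻¹ b₁ b₂ * S b₂.1 a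

/-!
Only the implication from Markov inclusion to inclusion of separations needs an argument: for every
open route `ρ` of a graph `G` without solid edges, a distribution is wanted which is Markov with
respect to `G` but in which the end points of `ρ` are dependent given the conditioning set. Label
the edges of `ρ`, extended by one edge at either end, by elements of `ZMod 2`, uniformly at random
among the labellings that do not change across non-colliders. A non-collider carries the label of
its adjacent edges, a collider the jump of the labelling, and a node of `G` the string of the values
at all the positions where `ρ` visits it.

For homomorphisms `u`, `v`, `w` on a finite abelian group with the uniform distribution, `u` and `v`
are independent given `w` iff every element of `ker w` is a sum of elements of `ker u ⊓ ker w` and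
`ker v ⊓ ker w`. If all routes between two sets are blocked, then a labelling in `ker w` can be cut
at blocked positions into a part away from the first set and a part away from the second. If `ρ` is
open, then `ker w` consists of the two constant labellings, and the nonzero one, being seen at both
end points, is not such a sum.
-/

section Atomic

variable {E F β γ : Type*} [MeasurableSpace E] [mF : MeasurableSpace F] [MeasurableSpace β]
  [MeasurableSpace γ]

lemma condExp_comap_apply_eq_cond_real [MeasurableSingletonClass F] {μ : Measure E}
    [IsFiniteMeasure μ] {f : E → F} (hf : Measurable f) {x : E} (hx : μ (f ⁻¹' {f x}) ≠ 0)
    {A : Set E} (hA : MeasurableSet A) :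
    (μ⟦A | mF.comap f⟧) x = (μ[|f ⁻¹' {f x}]).real A := by
  have hfiber : MeasurableSet[mF.comap f] (f ⁻¹' {f x}) := ⟨_, measurableSet_singleton _, rfl⟩
  have hconst : Set.EqOn (μ⟦A | mF.comap f⟧) (fun _ => (μ⟦A | mF.comap f⟧) x) (f ⁻¹' {f x}) :=
    fun y hy => stronglyMeasurable_condExp.factorsThrough hy
  have hmass : μ.real (f ⁻¹' {f x}) * (μ⟦A | mF.comap f⟧) x = μ.real (f ⁻¹' {f x} ∩ A) := by
    have h := setIntegral_condExp hf.comap_le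
      ((integrable_const (μ := μ) (1 : ℝ)).indicator hA) hfiber
    rw [setIntegral_congr_fun (hf.comap_le _ hfiber) hconst, setIntegral_const,
      setIntegral_indicator hA, setIntegral_const] at h
    simpa only [smul_eq_mul, mul_one] using h
  rw [measureReal_def, cond_apply (hf.comap_le _ hfiber), ENNReal.toReal_mul, ENNReal.toReal_inv,
    ← measureReal_def, ← measureReal_def, ← hmass,
    inv_mul_cancel_left₀ ((measureReal_ne_zero_iff).2 hx)]

theorem condIndepFun_comap_iff_forall_indepFun_cond [StandardBorelSpace E]
    [MeasurableSingletonClass F] {μ : Measure E} [IsFiniteMeasure μ] {f : E → F} {g : E → β}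
    {h : E → γ} (hf : Measurable f) (hg : Measurable g) (hh : Measurable h)
    (hatoms : ∀ᵐ x ∂μ, μ (f ⁻¹' {f x}) ≠ 0) :
    CondIndepFun (mF.comap f) hf.comap_le g h μ ↔ ∀ y, IndepFun g h μ[|f ⁻¹' {y}] := by
  have hcond (x : E) (hx : μ (f ⁻¹' {f x}) ≠ 0) {s : Set β} {t : Set γ} (hs : MeasurableSet s)
      (ht : MeasurableSet t) :
      (μ⟦g ⁻¹' s ∩ h ⁻¹' t | mF.comap f⟧) x
          = (μ⟦g ⁻¹' s | mF.comap f⟧) x * (μ⟦h ⁻¹' t | mF.comap f⟧) x ↔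
        μ[|f ⁻¹' {f x}] (g ⁻¹' s ∩ h ⁻¹' t)
          = μ[|f ⁻¹' {f x}] (g ⁻¹' s) * μ[|f ⁻¹' {f x}] (h ⁻¹' t) := by
    rw [condExp_comap_apply_eq_cond_real hf hx (hg hs),
      condExp_comap_apply_eq_cond_real hf hx (hh ht),
      condExp_comap_apply_eq_cond_real hf hx ((hg hs).inter (hh ht)), measureReal_def,
      measureReal_def, measureReal_def, ← ENNReal.toReal_mul,
      ENNReal.toReal_eq_toReal_iff' (by finiteness) (by finiteness)]
  simp_rw [condIndepFun_iff_condExp_inter_preimage_eq_mul hg hh,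
    indepFun_iff_measure_inter_preimage_eq_mul]
  refine ⟨fun hci y s t hs ht => ?_, fun hind s t hs ht => ?_⟩
  · by_cases hy : μ (f ⁻¹' {y}) = 0
    · simp [cond_eq_zero_of_meas_eq_zero hy]
    · obtain ⟨x, rfl : f x = y, hx⟩ :=
        ((frequently_ae_mem_iff.2 hy).and_eventually (hci s t hs ht)).exists
      exact (hcond x hy hs ht).1 hx
  · filter_upwards [hatoms] with x hx
    exact (hcond x hx hs ht).2 (hind (f x) s t hs ht)

end Atomic

section Pushforward

variable {Ω E β γ : Type*} [MeasurableSpace Ω] [MeasurableSpace E] [MeasurableSpace β]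
  [MeasurableSpace γ]

lemma cond_map {μ : Measure Ω} {X : Ω → E} (hX : Measurable X) {A : Set E}
    (hA : MeasurableSet A) : (μ.map X)[|A] = (μ[|X ⁻¹' A]).map X := by
  rw [ProbabilityTheory.cond, ProbabilityTheory.cond, Measure.map_smul, Measure.map_apply hX hA,
    Measure.restrict_map hX hA]

lemma indepFun_map_iff {μ : Measure Ω} {X : Ω → E} {g : E → β} {h : E → γ} (hX : Measurable X)
    (hg : Measurable g) (hh : Measurable h) :
    IndepFun g h (μ.map X) ↔ IndepFun (g ∘ X) (h ∘ X) μ := by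
  simp_rw [indepFun_iff_measure_inter_preimage_eq_mul]
  refine forall₄_congr fun s t hs ht => ?_
  rw [Measure.map_apply hX ((hg hs).inter (hh ht)), Measure.map_apply hX (hg hs),
    Measure.map_apply hX (hh ht)]
  rfl

end Pushforward

section UniformOn

variable {Ω : Type*} [MeasurableSpace Ω]

lemma cond_uniformOn_univ [Finite Ω] [MeasurableSingletonClass Ω] (s : Set Ω) :
    (uniformOn (Set.univ : Set Ω))[|s] = uniformOn s := by
  rw [uniformOn, uniformOn, cond_cond_eq_cond_inter' .univ s.toFinite.measurableSet
    (Measure.count_apply_lt_top.2 Set.finite_univ).ne, Set.univ_inter]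

theorem condIndepFun_map_uniformOn_univ_iff [Finite Ω] [Nonempty Ω] [DiscreteMeasurableSpace Ω]
    {E F β γ : Type*} [MeasurableSpace E] [StandardBorelSpace E] [mF : MeasurableSpace F]
    [MeasurableSingletonClass F] [MeasurableSpace β] [MeasurableSpace γ] (X : Ω → E) {f : E → F}
    {g : E → β} {h : E → γ} (hf : Measurable f) (hg : Measurable g) (hh : Measurable h) :
    CondIndepFun (mF.comap f) hf.comap_le g h ((uniformOn Set.univ).map X) ↔
      ∀ y, IndepFun (g ∘ X) (h ∘ X) (uniformOn ((f ∘ X) ⁻¹' {y})) := by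
  have hX : Measurable X := .of_discrete
  have hfiber (y : F) : MeasurableSet (f ⁻¹' {y}) := hf (measurableSet_singleton y)
  have hatoms : ∀ᵐ x ∂(uniformOn Set.univ).map X,
      (uniformOn Set.univ).map X (f ⁻¹' {f x}) ≠ 0 := by
    have hrange : ∀ᵐ x ∂(uniformOn Set.univ).map X, x ∈ Set.range X :=
      (ae_map_iff hX.aemeasurable (Set.finite_range X).measurableSet).2
        (.of_forall Set.mem_range_self)
    filter_upwards [hrange]
    rintro _ ⟨ω, rfl⟩
    rw [Measure.map_apply hX (hfiber _), Ne, uniformOn_eq_zero_iff Set.finite_univ, Set.univ_inter]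
    exact Set.Nonempty.ne_empty ⟨ω, rfl⟩
  rw [condIndepFun_comap_iff_forall_indepFun_cond hf hg hh hatoms]
  refine forall_congr' fun y => ?_
  rw [cond_map hX (hfiber y), indepFun_map_iff hX hg hh, cond_uniformOn_univ, Set.preimage_comp]

end UniformOn

section AddCommGroup

variable {Γ : Type*} [AddCommGroup Γ]

lemma encard_inter_mul_encard_of_invariant {H₁ H₂ : AddSubgroup Γ} {A B C : Set Γ}
    (hA : ∀ x ∈ A, ∀ k ∈ H₁, x + k ∈ A) (hB : ∀ x ∈ B, ∀ k ∈ H₂, x + k ∈ B)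
    (hC₁ : ∀ x ∈ C, ∀ k ∈ H₁, x + k ∈ C) (hC₂ : ∀ x ∈ C, ∀ k ∈ H₂, x + k ∈ C)
    (hdiff : ∀ x ∈ C, ∀ y ∈ C, y - x ∈ H₁ ⊔ H₂) :
    (C ∩ (A ∩ B)).encard * C.encard = (C ∩ A).encard * (C ∩ B).encard := by
  have hsplit : ∀ d : Γ, ∃ a, d ∈ H₁ ⊔ H₂ → a ∈ H₁ ∧ d - a ∈ H₂ := fun d => by
    by_cases hd : d ∈ H₁ ⊔ H₂
    · obtain ⟨a, ha, b, hb, rfl⟩ := AddSubgroup.mem_sup.1 hd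
      exact ⟨a, fun _ => ⟨ha, by simpa using hb⟩⟩
    · exact ⟨0, fun h => (hd h).elim⟩
  choose a ha using hsplit
  -- Translating a pair by the `H₁`-part of its difference preserves the difference.
  let shift : Γ × Γ → Γ × Γ := fun p => (p.1 - a (p.2 - p.1), p.2 - a (p.2 - p.1))
  have hshift : shift.Bijective := Function.bijective_iff_has_inverse.2
    ⟨fun p => (p.1 + a (p.2 - p.1), p.2 + a (p.2 - p.1)), fun p => by simp [shift],
      fun p => by simp [shift]⟩
  have hpreimage : shift ⁻¹' ((C ∩ A) ×ˢ (C ∩ B)) = (C ∩ (A ∩ B)) ×ˢ C := by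
    ext ⟨x, y⟩
    simp only [Set.mem_preimage, Set.mem_prod, Set.mem_inter_iff, shift]
    constructor
    · rintro ⟨⟨hxC, hxA⟩, hyC, hyB⟩
      obtain ⟨h₁, h₂⟩ := ha (y - x) (by simpa using hdiff _ hxC _ hyC)
      have hxB := hB _ hyB _ (neg_mem h₂)
      rw [show y - a (y - x) + -(y - x - a (y - x)) = x by abel] at hxB
      exact ⟨⟨by simpa using hC₁ _ hxC _ h₁, by simpa using hA _ hxA _ h₁, hxB⟩,
        by simpa using hC₁ _ hyC _ h₁⟩
    · rintro ⟨⟨hxC, hxA, hxB⟩, hyC⟩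
      obtain ⟨h₁, h₂⟩ := ha (y - x) (hdiff _ hxC _ hyC)
      rw [show y - a (y - x) = x + (y - x - a (y - x)) by abel]
      simp only [sub_eq_add_neg x (a (y - x))]
      exact ⟨⟨hC₁ _ hxC _ (neg_mem h₁), hA _ hxA _ (neg_mem h₁)⟩, hC₂ _ hxC _ h₂, hB _ hxB _ h₂⟩
  rw [← Set.encard_prod, ← Set.encard_prod, ← hpreimage, Set.encard_preimage_of_bijective hshift]

lemma uniformOn_inter_eq_mul {Ω : Type*} [Finite Ω] [MeasurableSpace Ω]
    [DiscreteMeasurableSpace Ω] {A B C : Set Ω}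
    (h : (C ∩ (A ∩ B)).encard * C.encard = (C ∩ A).encard * (C ∩ B).encard) :
    uniformOn C (A ∩ B) = uniformOn C A * uniformOn C B := by
  rcases C.eq_empty_or_nonempty with rfl | hC
  · simp
  have hC0 : Measure.count C ≠ 0 := Measure.count_ne_zero hC
  have hCtop : Measure.count C ≠ ⊤ := (Measure.count_apply_lt_top.2 C.toFinite).ne
  have h' : Measure.count (C ∩ (A ∩ B)) * Measure.count C
      = Measure.count (C ∩ A) * Measure.count (C ∩ B) := by
    simp only [Measure.count_apply (.of_discrete), ← ENat.toENNReal_mul, h]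
  simp only [uniformOn, cond_apply (MeasurableSet.of_discrete (s := C))]
  rw [mul_mul_mul_comm, ← h', mul_mul_mul_comm, ENNReal.inv_mul_cancel hC0 hCtop, mul_one]

theorem forall_indepFun_uniformOn_fiber_iff [Finite Γ] [MeasurableSpace Γ]
    [DiscreteMeasurableSpace Γ] {β γ δ : Type*} [MeasurableSpace β] [MeasurableSingletonClass β]
    [MeasurableSpace γ] [MeasurableSingletonClass γ] {u : Γ → β} {v : Γ → γ} {w : Γ → δ}
    {K₁ K₂ K : AddSubgroup Γ} (hu : ∀ x y, u x = u y ↔ y - x ∈ K₁)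
    (hv : ∀ x y, v x = v y ↔ y - x ∈ K₂) (hw : ∀ x y, w x = w y ↔ y - x ∈ K) :
    (∀ z, IndepFun u v (uniformOn (w ⁻¹' {z}))) ↔ K ≤ (K₁ ⊓ K) ⊔ (K₂ ⊓ K) := by
  refine ⟨fun hind d hd => ?_, fun hK z => ?_⟩
  · have hprod := indepFun_iff_measure_inter_preimage_eq_mul.1 (hind (w 0)) {u 0} {v d}
      (measurableSet_singleton _) (measurableSet_singleton _)
    have h₁ : uniformOn (w ⁻¹' {w 0}) (u ⁻¹' {u 0}) ≠ 0 := by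
      rw [Ne, uniformOn_eq_zero_iff (Set.toFinite _)]
      exact Set.Nonempty.ne_empty ⟨0, rfl, rfl⟩
    have h₂ : uniformOn (w ⁻¹' {w 0}) (v ⁻¹' {v d}) ≠ 0 := by
      rw [Ne, uniformOn_eq_zero_iff (Set.toFinite _)]
      exact Set.Nonempty.ne_empty ⟨d, (hw d 0).2 (by simpa using hd), rfl⟩
    have hne := hprod ▸ mul_ne_zero h₁ h₂
    rw [Ne, uniformOn_eq_zero_iff (Set.toFinite _), ← Ne, ← Set.nonempty_iff_ne_empty] at hne
    obtain ⟨x, hxw, hxu, hxv⟩ := hne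
    have hxK : x ∈ K := by simpa using (hw 0 x).1 hxw.symm
    have hdxK : d - x ∈ K := sub_mem hd hxK
    exact AddSubgroup.mem_sup.2 ⟨x, ⟨by simpa using (hu 0 x).1 hxu.symm, hxK⟩, d - x,
      ⟨(hv x d).1 hxv, hdxK⟩, add_sub_cancel x d⟩
  · refine indepFun_iff_measure_inter_preimage_eq_mul.2 fun s t _ _ =>
      uniformOn_inter_eq_mul (encard_inter_mul_encard_of_invariant (H₁ := K₁ ⊓ K) (H₂ := K₂ ⊓ K)
        ?_ ?_ ?_ ?_ ?_)
    · intro x (hx : u x ∈ s) k hk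
      rwa [(hu x (x + k)).2 (by simpa using hk.1)] at hx
    · intro x (hx : v x ∈ t) k hk
      rwa [(hv x (x + k)).2 (by simpa using hk.1)] at hx
    · intro x (hx : w x = z) k hk
      rwa [(hw x (x + k)).2 (by simpa using hk.2)] at hx
    · intro x (hx : w x = z) k hk
      rwa [(hw x (x + k)).2 (by simpa using hk.2)] at hx
    · rintro x (rfl : w x = z) y hy
      exact hK ((hw x y).1 (Eq.symm hy))

end AddCommGroup

section EdgeLabelings

variable {n : ℕ} (col : Fin (n + 1) → Prop)

/-- Labellings by `ZMod 2` of the edges of a path with positions `0, …, n`, where `col` tells which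
positions are colliders, that do not change across a non-collider. Edges `k.castSucc` and `k.succ`
are the ones before and after position `k`; the path is given an extra edge at either end so that
every position has two. -/
def edgeLabelings : AddSubgroup (Fin (n + 2) → ZMod 2) where
  carrier := {e | ∀ k, ¬ col k → e k.castSucc = e k.succ}
  add_mem' ha hb k hk := congrArg₂ (· + ·) (ha k hk) (hb k hk)
  zero_mem' _ _ := rfl
  neg_mem' ha k hk := congrArg (- ·) (ha k hk)

/-- The value that an edge labelling induces at position `k`: the jump of the labelling at a
collider, the common label of the adjacent edges at a non-collider. -/
def nodeValue (k : Fin (n + 1)) : edgeLabelings col →+ ZMod 2 :=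
  let label (i : Fin (n + 2)) := (Pi.evalAddMonoidHom _ i).comp (edgeLabelings col).subtype
  if col k then label k.succ - label k.castSucc else label k.succ

/-- The edge labellings inducing the value zero at every position in `R`. -/
def vanishing (R : Set (Fin (n + 1))) : AddSubgroup (edgeLabelings col) :=
  ⨅ k ∈ R, (nodeValue col k).ker

variable {col} {P Q R T : Set (Fin (n + 1))}

lemma nodeValue_of_col {k : Fin (n + 1)} (hk : col k) (e : edgeLabelings col) :
    nodeValue col k e = e.1 k.succ - e.1 k.castSucc := by
  simp [nodeValue, hk]

lemma nodeValue_of_not_col {k : Fin (n + 1)} (hk : ¬ col k) (e : edgeLabelings col) :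
    nodeValue col k e = e.1 k.succ := by
  simp [nodeValue, hk]

lemma mem_vanishing {e : edgeLabelings col} :
    e ∈ vanishing col R ↔ ∀ k ∈ R, nodeValue col k e = 0 := by
  simp [vanishing, AddSubgroup.mem_iInf]

lemma nodeValue_eq_zero {k : Fin (n + 1)} {e : edgeLabelings col} (h₀ : e.1 k.castSucc = 0)
    (h₁ : e.1 k.succ = 0) : nodeValue col k e = 0 := by
  by_cases hk : col k
  · rw [nodeValue_of_col hk, h₀, h₁, sub_zero]
  · rw [nodeValue_of_not_col hk, h₁]

lemma indicator_mem_edgeLabelings {S : Set (Fin (n + 2))}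
    (hS : ∀ k, (col k ↔ k ∈ R) → (k.castSucc ∈ S ↔ k.succ ∈ S)) {e : edgeLabelings col}
    (he : e ∈ vanishing col R) : S.indicator e.1 ∈ edgeLabelings col := by
  intro k hk
  by_cases hkR : k ∈ R
  · have h₁ : e.1 k.succ = 0 := nodeValue_of_not_col hk e ▸ mem_vanishing.1 he k hkR
    have h₀ : e.1 k.castSucc = 0 := (e.2 k hk).trans h₁
    rw [Set.indicator_apply_eq_zero.2 fun _ => h₀, Set.indicator_apply_eq_zero.2 fun _ => h₁]
  · simp only [Set.indicator_apply, hS k (iff_of_false hk hkR), e.2 k hk]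

lemma indicator_mem_vanishing {S : Set (Fin (n + 2))}
    (hS : ∀ k, (col k ↔ k ∈ R) → (k.castSucc ∈ S ↔ k.succ ∈ S)) {e : edgeLabelings col}
    (he : e ∈ vanishing col R) :
    (⟨S.indicator e.1, indicator_mem_edgeLabelings hS he⟩ : edgeLabelings col)
      ∈ vanishing col R := by
  refine mem_vanishing.2 fun k hkR => ?_
  have hek := mem_vanishing.1 he k hkR
  by_cases hk : col k
  · rw [nodeValue_of_col hk, sub_eq_zero] at hek ⊢
    simp only [Set.indicator_apply, hS k (iff_of_true hk hkR), hek]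
  · rw [nodeValue_of_not_col hk] at hek ⊢
    exact Set.indicator_apply_eq_zero.2 fun _ => hek

variable (col P R) in
/-- The edges that can be reached from a position in `P` along positions that are open given `R`,
that is, colliders in `R` or non-colliders outside `R`. -/
def openReach : Set (Fin (n + 2)) :=
  {i | ∃ p ∈ P, (p.castSucc < i ∧ ∀ k, p < k → k.castSucc < i → (col k ↔ k ∈ R)) ∨
    (i ≤ p.castSucc ∧ ∀ k, i ≤ k.castSucc → k < p → (col k ↔ k ∈ R))}

lemma castSucc_mem_openReach_iff {k : Fin (n + 1)} (hk : col k ↔ k ∈ R) :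
    k.castSucc ∈ openReach col P R ↔ k.succ ∈ openReach col P R := by
  refine exists_congr fun p => and_congr_right fun _ => ?_
  simp only [Fin.castSucc_lt_castSucc_iff, Fin.castSucc_le_castSucc_iff, Fin.castSucc_lt_succ_iff,
    Fin.succ_le_castSucc_iff]
  grind

lemma castSucc_mem_openReach {p : Fin (n + 1)} (hp : p ∈ P) : p.castSucc ∈ openReach col P R :=
  ⟨p, hp, .inr ⟨le_rfl, fun _ h₁ h₂ => (h₂.not_ge h₁).elim⟩⟩

lemma succ_mem_openReach {p : Fin (n + 1)} (hp : p ∈ P) : p.succ ∈ openReach col P R :=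
  ⟨p, hp, .inl ⟨p.castSucc_lt_succ,
    fun _ h₁ h₂ => (h₁.not_ge (Fin.castSucc_lt_succ_iff.1 h₂)).elim⟩⟩

lemma not_mem_openReach_of_blocked {q : Fin (n + 1)}
    (hblock : ∀ p ∈ P, ∃ k, (p < k ∧ k < q ∨ q < k ∧ k < p) ∧ ¬ (col k ↔ k ∈ R)) :
    q.castSucc ∉ openReach col P R ∧ q.succ ∉ openReach col P R := by
  constructor
  all_goals
    rintro ⟨p, hp, h⟩
    obtain ⟨k, hk, hclosed⟩ := hblock p hp
    simp only [Fin.castSucc_lt_castSucc_iff, Fin.castSucc_le_castSucc_iff,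
      Fin.castSucc_lt_succ_iff, Fin.succ_le_castSucc_iff] at h
    grind

theorem vanishing_le_of_blocked
    (hblock : ∀ p ∈ P, ∀ q ∈ Q, ∃ k, (p < k ∧ k < q ∨ q < k ∧ k < p) ∧ ¬ (col k ↔ k ∈ R)) :
    vanishing col R ≤
      (vanishing col P ⊓ vanishing col R) ⊔ (vanishing col Q ⊓ vanishing col R) := by
  intro e he
  have hS (k) (hk : col k ↔ k ∈ R) := castSucc_mem_openReach_iff (P := P) hk
  have hSc (k) (hk : col k ↔ k ∈ R) := not_congr (hS k hk)
  refine AddSubgroup.mem_sup.2 ⟨_, ⟨?_, indicator_mem_vanishing hSc he⟩, _,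
    ⟨?_, indicator_mem_vanishing hS he⟩, Subtype.ext (Set.indicator_compl_add_self _ _)⟩
  · exact mem_vanishing.2 fun p hp => nodeValue_eq_zero
      (Set.indicator_of_notMem (not_not_intro (castSucc_mem_openReach hp)) _)
      (Set.indicator_of_notMem (not_not_intro (succ_mem_openReach hp)) _)
  · refine mem_vanishing.2 fun q hq => ?_
    have hq' := not_mem_openReach_of_blocked fun p hp => hblock p hp q hq
    exact nodeValue_eq_zero (Set.indicator_of_notMem hq'.1 _) (Set.indicator_of_notMem hq'.2 _)

lemma apply_eq_of_mem_vanishing (hopen : ∀ k, col k ↔ k ∈ R) {e : edgeLabelings col}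
    (he : e ∈ vanishing col R) (i : Fin (n + 2)) : e.1 i = e.1 0 := by
  induction i using Fin.induction with
  | zero => rfl
  | succ k ih =>
    by_cases hk : col k
    · rw [← ih, ← sub_eq_zero, ← nodeValue_of_col hk, mem_vanishing.1 he k ((hopen k).1 hk)]
    · rw [← ih, e.2 k hk]

theorem not_vanishing_le_of_open (hopen : ∀ k, col k ↔ k ∈ R) (hP : ∃ p ∈ P, ¬ col p)
    (hQ : ∃ q ∈ Q, ¬ col q) :
    ¬ vanishing col R ≤
      (vanishing col P ⊓ vanishing col R) ⊔ (vanishing col Q ⊓ vanishing col R) := by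
  have hzero {S : Set (Fin (n + 1))} (hS : ∃ s ∈ S, ¬ col s) {e : edgeLabelings col}
      (he : e ∈ vanishing col S ⊓ vanishing col R) : e.1 0 = 0 := by
    obtain ⟨s, hsS, hs⟩ := hS
    rw [← apply_eq_of_mem_vanishing hopen he.2 s.succ, ← nodeValue_of_not_col hs]
    exact mem_vanishing.1 he.1 s hsS
  let one : edgeLabelings col := ⟨1, fun _ _ => rfl⟩
  have hone : one ∈ vanishing col R := mem_vanishing.2 fun k hk => by
    rw [nodeValue_of_col ((hopen k).2 hk)]
    exact sub_self 1
  intro hle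
  obtain ⟨a, ha, b, hb, hab⟩ := AddSubgroup.mem_sup.1 (hle hone)
  have h : a.1 0 + b.1 0 = 1 := congrFun (congrArg Subtype.val hab) 0
  rw [hzero hP ha, hzero hQ hb] at h
  exact absurd h (by decide)

end EdgeLabelings

section PathVector

variable {n : ℕ} {col : Fin (n + 1) → Prop}

/-- An arbitrary injective encoding of finite strings over `ZMod 2` by real numbers. -/
def encodeReal (x : Fin n → ZMod 2) : ℝ := Fintype.equivFin (Fin n → ZMod 2) x

lemma encodeReal_injective : Function.Injective (encodeReal (n := n)) := fun x y h => by
  simpa [encodeReal, Fin.val_inj] using h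

/-- The vector whose coordinate at `v` records the values that an edge labelling induces at the
positions of a path where it visits `v`. -/
def pathVector (node : Fin (n + 1) → V) (e : edgeLabelings col) : V → ℝ := fun v =>
  encodeReal fun k => if node k = v then nodeValue col k e else 0

lemma marg_pathVector_eq_iff (node : Fin (n + 1) → V) (S : Finset V) (e e' : edgeLabelings col) :
    marg S (pathVector node e) = marg S (pathVector node e') ↔
      e' - e ∈ vanishing col (node ⁻¹' S) := by
  simp only [funext_iff, marg, pathVector, encodeReal_injective.eq_iff, mem_vanishing, map_sub,
    sub_eq_zero, Set.mem_preimage, Finset.mem_coe, Subtype.forall]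
  refine ⟨fun h k hk => ?_, fun h v hv k => ?_⟩
  · simpa using (h _ hk k).symm
  · split_ifs with hk
    · exact (h k (hk ▸ hv)).symm
    · rfl

/-- The distribution on `ℝ^V` of the vector induced by a uniformly random edge labelling. -/
def pathLaw (col : Fin (n + 1) → Prop) (node : Fin (n + 1) → V) : Measure (V → ℝ) :=
  (uniformOn Set.univ).map (pathVector (col := col) node)

instance (node : Fin (n + 1) → V) : IsProbabilityMeasure (pathLaw col node) :=
  have : IsProbabilityMeasure (uniformOn (Set.univ : Set (edgeLabelings col))) :=
    isProbabilityMeasure_uniformOn Set.finite_univ Set.univ_nonempty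
  Measure.isProbabilityMeasure_map Measurable.of_discrete.aemeasurable

theorem mCI_pathLaw_iff [Fintype V] (node : Fin (n + 1) → V) (X Y Z : Finset V) :
    mCI (pathLaw col node) X Y Z ↔
      vanishing col (node ⁻¹' Z) ≤ (vanishing col (node ⁻¹' X) ⊓ vanishing col (node ⁻¹' Z)) ⊔
        (vanishing col (node ⁻¹' Y) ⊓ vanishing col (node ⁻¹' Z)) :=
  (condIndepFun_map_uniformOn_univ_iff _ (marg_measurable Z) (marg_measurable X)
    (marg_measurable Y)).trans <|
  forall_indepFun_uniformOn_fiber_iff (marg_pathVector_eq_iff node X)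
    (marg_pathVector_eq_iff node Y) (marg_pathVector_eq_iff node Z)

end PathVector

namespace PreGraph.Route

variable {G : PreGraph V}

lemma isZOpen_iff_of_no_solid (hG : ∀ a b, ¬ G.solid a b) {ρ : G.Route} {Z : Finset V} :
    ρ.IsZOpen Z ↔ ∀ k ≤ ρ.len, ρ.colliderNodeAt k ↔ ρ.nodes k ∈ Z := by
  have hsec (p q : ℕ) : ¬ ρ.colliderSectionOcc p q := fun h => hG _ _ h.2.2.2.2.1
  constructor
  · rintro ⟨h₁, -, h₃⟩ k hk
    refine ⟨h₁ k, fun hZ => ?_⟩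
    by_contra hc
    exact h₃ k hk hc (fun ⟨p, q, h, _⟩ => hsec p q h) hZ
  · intro h
    exact ⟨fun k hk => (h k hk.2.1.le).1 hk, fun p q hpq => (hsec p q hpq).elim,
      fun k hk hc _ hZ => hc ((h k hk).2 hZ)⟩

/-- The part of a route between the positions `p` and `q`. -/
def segment (ρ : G.Route) (p q : ℕ) (hq : q ≤ ρ.len) : G.Route where
  len := q - p
  nodes i := ρ.nodes (p + i)
  adj_step i hi := ρ.adj_step (p + i) (by omega)

lemma segment_colliderNodeAt_iff (ρ : G.Route) {p q : ℕ} (hq : q ≤ ρ.len) {k : ℕ} (h₁ : 1 ≤ k)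
    (h₂ : k < q - p) :
    (ρ.segment p q hq).colliderNodeAt k ↔ ρ.colliderNodeAt (p + k) := by
  simp only [colliderNodeAt, segment, show p + k - 1 = p + (k - 1) by omega, add_assoc]
  exact ⟨fun h => ⟨by omega, by omega, h.2.2⟩, fun h => ⟨h₁, h₂, h.2.2⟩⟩

lemma segment_isZOpen (hG : ∀ a b, ¬ G.solid a b) (ρ : G.Route) {p q : ℕ} (hpq : p ≤ q)
    (hq : q ≤ ρ.len) {Z : Finset V} (hpZ : ρ.nodes p ∉ Z) (hqZ : ρ.nodes q ∉ Z)
    (h : ∀ k, p < k → k < q → (ρ.colliderNodeAt k ↔ ρ.nodes k ∈ Z)) :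
    (ρ.segment p q hq).IsZOpen Z := by
  refine (isZOpen_iff_of_no_solid hG).2 fun k (hk : k ≤ q - p) => ?_
  rcases k.eq_zero_or_pos with rfl | hk0
  · exact iff_of_false (fun hc => absurd hc.1 (by omega)) hpZ
  rcases hk.lt_or_eq with hlt | rfl
  · rw [segment_colliderNodeAt_iff ρ hq hk0 hlt]
    exact h _ (by omega) (by omega)
  · refine iff_of_false (fun hc => lt_irrefl _ hc.2.1) ?_
    simpa [segment, hpq] using hqZ

lemma exists_closed_between_of_sep (hG : ∀ a b, ¬ G.solid a b) (ρ : G.Route) {X Y Z : Finset V}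
    (hXZ : Disjoint X Z) (hYZ : Disjoint Y Z) (hsep : G.Sep X Y Z) {p q : ℕ} (hp : p ≤ ρ.len)
    (hq : q ≤ ρ.len) (hpX : ρ.nodes p ∈ X) (hqY : ρ.nodes q ∈ Y) :
    ∃ k, (p < k ∧ k < q ∨ q < k ∧ k < p) ∧ ¬ (ρ.colliderNodeAt k ↔ ρ.nodes k ∈ Z) := by
  have hpZ := Finset.disjoint_left.1 hXZ hpX
  have hqZ := Finset.disjoint_left.1 hYZ hqY
  by_contra! hopen
  rcases le_total p q with hpq | hqp
  · exact hsep ⟨ρ.segment p q hq, .inl ⟨hpX, by simpa [segment, hpq] using hqY⟩,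
      ρ.segment_isZOpen hG hpq hq hpZ hqZ fun k h₁ h₂ => hopen k (.inl ⟨h₁, h₂⟩)⟩
  · exact hsep ⟨ρ.segment q p hp, .inr ⟨hqY, by simpa [segment, hqp] using hpX⟩,
      ρ.segment_isZOpen hG hqp hp hqZ hpZ fun k h₁ h₂ => hopen k (.inr ⟨h₁, h₂⟩)⟩

/-- The distribution on `ℝ^V` of a uniformly random edge labelling of a route. -/
def law (ρ : G.Route) : Measure (V → ℝ) :=
  pathLaw (fun k : Fin (ρ.len + 1) => ρ.colliderNodeAt k) fun k => ρ.nodes k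

instance (ρ : G.Route) : IsProbabilityMeasure ρ.law :=
  inferInstanceAs (IsProbabilityMeasure (pathLaw _ _))

variable [Fintype V]

theorem measGlobalMarkov_law [DecidableEq V] (hG : ∀ a b, ¬ G.solid a b) (ρ : G.Route) :
    measGlobalMarkov G ρ.law := by
  intro X Y Z hdisj hsep
  refine (mCI_pathLaw_iff _ X Y Z).2 (vanishing_le_of_blocked fun p hp q hq => ?_)
  obtain ⟨k, hk, hclosed⟩ := ρ.exists_closed_between_of_sep hG hdisj.2.1 hdisj.2.2 hsep
    (Nat.lt_succ_iff.1 p.2) (Nat.lt_succ_iff.1 q.2) hp hq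
  exact ⟨⟨k, by omega⟩, hk, hclosed⟩

theorem not_mCI_law (hG : ∀ a b, ¬ G.solid a b) {ρ : G.Route} {X Y Z : Finset V}
    (hends : (ρ.nodes 0 ∈ X ∧ ρ.nodes ρ.len ∈ Y) ∨ (ρ.nodes 0 ∈ Y ∧ ρ.nodes ρ.len ∈ X))
    (hopen : ρ.IsZOpen Z) : ¬ mCI ρ.law X Y Z := by
  have hstart : ¬ ρ.colliderNodeAt (0 : Fin (ρ.len + 1)) := fun h => absurd h.1 (by simp)
  have hend : ¬ ρ.colliderNodeAt (Fin.last ρ.len) := fun h => lt_irrefl _ h.2.1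
  refine fun hCI => not_vanishing_le_of_open ?_ ?_ ?_ ((mCI_pathLaw_iff _ X Y Z).1 hCI)
  · exact fun k => (isZOpen_iff_of_no_solid hG).1 hopen k (Nat.lt_succ_iff.1 k.2)
  · exact hends.elim (fun h => ⟨0, h.1, hstart⟩) fun h => ⟨Fin.last _, h.2, hend⟩
  · exact hends.elim (fun h => ⟨Fin.last _, h.2, hend⟩) fun h => ⟨0, h.1, hstart⟩

end PreGraph.Route

theorem setOf_measGlobalMarkov_subset_iff [Fintype V] [DecidableEq V] {G H : PreGraph V}
    (hG : ∀ a b, ¬ G.solid a b) :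
    {μ : ProbabilityMeasure (V → ℝ) | measGlobalMarkov G (μ : Measure (V → ℝ))} ⊆
        {μ : ProbabilityMeasure (V → ℝ) | measGlobalMarkov H (μ : Measure (V → ℝ))} ↔
      ∀ X Y Z : Finset V, PDisj X Y Z → H.Sep X Y Z → G.Sep X Y Z := by
  constructor
  · rintro hsub X Y Z hdisj hsep ⟨ρ, hends, hopen⟩
    exact PreGraph.Route.not_mCI_law hG hends hopen
      (hsub (a := ⟨ρ.law, inferInstance⟩) (ρ.measGlobalMarkov_law hG) X Y Z hdisj hsep)
  · exact fun himp μ hμ X Y Z hdisj hsep => hμ X Y Z hdisj (himp X Y Z hdisj hsep)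

theorem amp_markov_equivalent_iff_same_separations_general [Fintype V] [DecidableEq V]
    (G H : PreGraph V) (hG : ∀ a b, ¬ G.solid a b) (hH : ∀ a b, ¬ H.solid a b) :
    ({μ : ProbabilityMeasure (V → ℝ) | measGlobalMarkov G (μ : Measure (V → ℝ))} =
      {μ : ProbabilityMeasure (V → ℝ) | measGlobalMarkov H (μ : Measure (V → ℝ))}) ↔
    ∀ X Y Z : Finset V, PDisj X Y Z → (G.Sep X Y Z ↔ H.Sep X Y Z) := by
  rw [Set.Subset.antisymm_iff, setOf_measGlobalMarkov_subset_iff hG,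
    setOf_measGlobalMarkov_subset_iff hH]
  grind

/-- **Theorem 1 (AMP case).** Two AMP chain graphs `G` and `H` over the same finite vertex
set are Markov equivalent (the probability distributions on `ℝ^V` satisfying the global
Markov property with respect to `G` are exactly those satisfying it with respect to `H`)
if and only if they represent the same separations. -/
theorem amp_markov_equivalent_iff_same_separations
    {V : Type*} [Fintype V] [DecidableEq V] (G H : ChainGraph V)
    (hG : G.IsAMP) (hH : H.IsAMP) :
    ({μ : ProbabilityMeasure (V → ℝ) | measGlobalMarkov G.toPreGraph (↑μ)} =
      {μ : ProbabilityMeasure (V → ℝ) | measGlobalMarkov H.toPreGraph (↑μ)}) ↔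
    ∀ X Y Z : Finset V, PDisj X Y Z →
      (G.toPreGraph.Sep X Y Z ↔ H.toPreGraph.Sep X Y Z) :=
  amp_markov_equivalent_iff_same_separations_general G.toPreGraph H.toPreGraph hG hH
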